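/- arXiv:1810.04886 — 2 statements merged into one kernel-verified Lean document; each statement's English description precedes it below -/
import Mathlib

section
/- Let Γ = (A, R) be an AFRA. Every semi-stable extension of Γ is a preferred extension of Γ. -/
/-!
Let `S` be semi-stable and `T ⊇ S` admissible. Adding an acceptable element to an admissible set
keeps it admissible (`AFRA.Admissible.insert`), so a maximal admissible set containing `T`, which
exists by Zorn's lemma, is a complete extension `C` (`AFRA.Admissible.exists_complete`). As
`S ⊆ C`, maximality of the range of `S` gives `C ⊆ range C = range S`. An element of `C` outside
`S` would thus be defeated by an attack in `S ⊆ C`, against conflict-freeness of `C`.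
Hence `T ⊆ C ⊆ S`.
-/

/-- An Argumentation Framework with Recursive Attacks: a set (type) of
arguments, a set (type) of attacks, each attack having a source argument
and a target which is either an argument or an attack. -/
structure AFRA where
  Arg : Type
  Att : Type
  src : Att → Arg
  trg : Att → Arg ⊕ Att

namespace AFRA

/-- The elements of an AFRA: arguments and attacks. -/
abbrev El (Γ : AFRA) : Type := Γ.Arg ⊕ Γ.Att

variable (Γ : AFRA)

/-- An attack `α` defeats `V` iff `V = trg α` (direct defeat) or `V` is an
attack whose source is `trg α` (indirect defeat). -/
def Defeats (α : Γ.Att) (V : Γ.El) : Prop :=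
  V = Γ.trg α ∨ ∃ β : Γ.Att, V = Sum.inr β ∧ Γ.trg α = Sum.inl (Γ.src β)

/-- `W` is acceptable w.r.t. `S` iff every attack defeating `W` is defeated by
some attack in `S`. -/
def Acceptable (S : Set Γ.El) (W : Γ.El) : Prop :=
  ∀ α : Γ.Att, Γ.Defeats α W → ∃ β : Γ.Att, Sum.inr β ∈ S ∧ Γ.Defeats β (Sum.inr α)

/-- `S` is conflict-free iff no element of `S` defeats another element of `S`. -/
def ConflictFree (S : Set Γ.El) : Prop :=
  ¬ ∃ α : Γ.Att, Sum.inr α ∈ S ∧ ∃ W ∈ S, Γ.Defeats α W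

/-- The characteristic function of an AFRA. -/
def charFun (S : Set Γ.El) : Set Γ.El := {V | Γ.Acceptable S V}

/-- `S` is admissible iff it is conflict-free and all its elements are
acceptable w.r.t. `S`. -/
def Admissible (S : Set Γ.El) : Prop :=
  Γ.ConflictFree S ∧ ∀ V ∈ S, Γ.Acceptable S V

/-- `S` is a complete extension iff it is admissible and contains every
element acceptable w.r.t. it. -/
def Complete (S : Set Γ.El) : Prop :=
  Γ.Admissible S ∧ ∀ V : Γ.El, Γ.Acceptable S V → V ∈ S

/-- `S` is a preferred extension iff it is a maximal admissible set. -/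
def Preferred (S : Set Γ.El) : Prop :=
  Γ.Admissible S ∧ ∀ T : Set Γ.El, Γ.Admissible T → S ⊆ T → S = T

/-- `S` is a stable extension iff it is conflict-free and defeats every
element outside of it. -/
def Stable (S : Set Γ.El) : Prop :=
  Γ.ConflictFree S ∧ ∀ V : Γ.El, V ∉ S → ∃ α : Γ.Att, Sum.inr α ∈ S ∧ Γ.Defeats α V

/-- The range of `S`: `S` together with everything defeated by `S`. -/
def range (S : Set Γ.El) : Set Γ.El :=
  S ∪ {V : Γ.El | ∃ α : Γ.Att, Sum.inr α ∈ S ∧ Γ.Defeats α V}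

/-- `S` is a semi-stable extension iff it is a complete extension with
maximal range among complete extensions. -/
def SemiStable (S : Set Γ.El) : Prop :=
  Γ.Complete S ∧ ∀ T : Set Γ.El, Γ.Complete T → Γ.range S ⊆ Γ.range T → Γ.range T = Γ.range S

/-- `S` is ideal iff it is admissible and contained in every preferred
extension. -/
def Ideal (S : Set Γ.El) : Prop :=
  Γ.Admissible S ∧ ∀ P : Set Γ.El, Γ.Preferred P → S ⊆ P

/-- An AFRA is an AF when every attack targets an argument. -/
def IsAF : Prop := ∀ α : Γ.Att, ∃ a : Γ.Arg, Γ.trg α = Sum.inl a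

/-- The Dung attack relation between arguments. -/
def AttacksAF (a b : Γ.Arg) : Prop :=
  ∃ α : Γ.Att, Γ.src α = a ∧ Γ.trg α = Sum.inl b

/-- D-conflict-freeness of a set of arguments. -/
def DConflictFree (U : Set Γ.Arg) : Prop :=
  ¬ ∃ a ∈ U, ∃ b ∈ U, Γ.AttacksAF a b

/-- D-acceptability of an argument w.r.t. a set of arguments. -/
def DAcceptable (U : Set Γ.Arg) (a : Γ.Arg) : Prop :=
  ∀ b : Γ.Arg, Γ.AttacksAF b a → ∃ c ∈ U, Γ.AttacksAF c b

/-- The D-characteristic function on sets of arguments. -/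
def dCharFun (U : Set Γ.Arg) : Set Γ.Arg := {a | Γ.DAcceptable U a}

/-- D-admissibility of a set of arguments. -/
def DAdmissible (U : Set Γ.Arg) : Prop :=
  Γ.DConflictFree U ∧ ∀ a ∈ U, Γ.DAcceptable U a

/-- D-complete extensions. -/
def DComplete (U : Set Γ.Arg) : Prop :=
  Γ.DAdmissible U ∧ ∀ a : Γ.Arg, Γ.DAcceptable U a → a ∈ U

/-- D-preferred extensions: maximal D-admissible sets. -/
def DPreferred (U : Set Γ.Arg) : Prop :=
  Γ.DAdmissible U ∧ ∀ W : Set Γ.Arg, Γ.DAdmissible W → U ⊆ W → U = W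

/-- The operator completing a set of arguments with all attacks arising
from it. -/
def Ext (U : Set Γ.Arg) : Set Γ.El :=
  (Sum.inl '' U) ∪ (Sum.inr '' {α : Γ.Att | Γ.src α ∈ U})

end AFRA

namespace AFRA

variable {Γ : AFRA}

theorem Acceptable.mono {S T : Set Γ.El} {V : Γ.El} (hST : S ⊆ T) (h : Γ.Acceptable S V) :
    Γ.Acceptable T V := fun α hα =>
  let ⟨β, hβ, hd⟩ := h α hα
  ⟨β, hST hβ, hd⟩

theorem range_mono {S T : Set Γ.El} (hST : S ⊆ T) : Γ.range S ⊆ Γ.range T := by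
  rintro V (hV | ⟨α, hα, hd⟩)
  · exact Or.inl (hST hV)
  · exact Or.inr ⟨α, hST hα, hd⟩

/-- An admissible set defeats nothing acceptable with respect to it: a defeating attack in the set
would in turn be defeated from within the set. -/
theorem Admissible.not_defeats {S : Set Γ.El} (hS : Γ.Admissible S) {V : Γ.El}
    (hV : Γ.Acceptable S V) {α : Γ.Att} (hα : Sum.inr α ∈ S) : ¬ Γ.Defeats α V := fun hd =>
  let ⟨β, hβ, hβα⟩ := hV α hd
  hS.1 ⟨β, hβ, _, hα, hβα⟩

/-- The analogue of Dung's fundamental lemma. -/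
theorem Admissible.insert {S : Set Γ.El} (hS : Γ.Admissible S) {V : Γ.El}
    (hV : Γ.Acceptable S V) : Γ.Admissible (insert V S) := by
  have hacc : ∀ W ∈ Insert.insert V S, Γ.Acceptable S W := by
    rintro W (rfl | hW)
    · exact hV
    · exact hS.2 W hW
  refine ⟨?_, fun W hW => (hacc W hW).mono (Set.subset_insert V S)⟩
  rintro ⟨α, hα, W, hW, hd⟩
  -- `S` defends `W` by some `β ∈ S` defeating `α`, although `α` is itself acceptable.
  obtain ⟨β, hβ, hβα⟩ := hacc W hW α hd
  exact hS.not_defeats (hacc _ hα) hβ hβα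

theorem Admissible.sUnion {c : Set (Set Γ.El)} (hc : ∀ S ∈ c, Γ.Admissible S)
    (hchain : IsChain (· ⊆ ·) c) : Γ.Admissible (⋃₀ c) := by
  refine ⟨?_, ?_⟩
  · rintro ⟨α, ⟨S, hS, hα⟩, W, ⟨T, hT, hW⟩, hd⟩
    rcases hchain.total hS hT with h | h
    · exact (hc T hT).1 ⟨α, h hα, W, hW, hd⟩
    · exact (hc S hS).1 ⟨α, hα, W, h hW, hd⟩
  · rintro V ⟨S, hS, hV⟩
    exact ((hc S hS).2 V hV).mono (Set.subset_sUnion_of_mem hS)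

theorem Admissible.exists_complete {S : Set Γ.El} (hS : Γ.Admissible S) :
    ∃ C, S ⊆ C ∧ Γ.Complete C := by
  obtain ⟨C, hSC, hC⟩ := zorn_subset_nonempty {T | Γ.Admissible T}
    (fun c hc hchain _ => ⟨⋃₀ c, Admissible.sUnion (fun T hT => hc hT) hchain,
      fun T hT => Set.subset_sUnion_of_mem hT⟩) S hS
  refine ⟨C, hSC, hC.prop, fun V hV => ?_⟩
  exact hC.le_of_ge (hC.prop.insert hV) (Set.subset_insert V C) (Set.mem_insert V C)

end AFRA

/-- Every semi-stable extension is a preferred extension. -/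
theorem stmt_11 (Γ : AFRA) (S : Set Γ.El) (h : Γ.SemiStable S) :
    Γ.Preferred S := by
  refine ⟨h.1.1, fun T hT hST => hST.antisymm fun V hV => ?_⟩
  obtain ⟨C, hTC, hC⟩ := hT.exists_complete
  have hSC := hST.trans hTC
  have hVS : V ∈ Γ.range S := h.2 C hC (AFRA.range_mono hSC) ▸ Or.inl (hTC hV)
  rcases hVS with hVS | ⟨α, hα, hd⟩
  · exact hVS
  · exact absurd ⟨α, hSC hα, V, hTC hV, hd⟩ hC.1.1
end

section
/- Let Γ = (A, R) be an AFRA which is an AF (i.e. trg(α) ∈ A for every α ∈ R), let S be the grounded extension of Γ (the least fixed point of the AFRA characteristic function F_Γ), and let U be the D-grounded extension of Γ (the least fixed point of the D-characteristic function on subsets of A). Then S = Ext(U). -/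
namespace AFRA

variable {Γ : AFRA}

@[simp]
theorem inl_mem_Ext {U : Set Γ.Arg} {a : Γ.Arg} : (Sum.inl a : Γ.El) ∈ Γ.Ext U ↔ a ∈ U := by
  simp [Ext]

@[simp]
theorem inr_mem_Ext {U : Set Γ.Arg} {α : Γ.Att} :
    (Sum.inr α : Γ.El) ∈ Γ.Ext U ↔ Γ.src α ∈ U := by
  simp [Ext]

theorem Ext_mono {U W : Set Γ.Arg} (h : U ⊆ W) : Γ.Ext U ⊆ Γ.Ext W := by
  rintro (a | α) hV
  · exact inl_mem_Ext.2 (h (inl_mem_Ext.1 hV))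
  · exact inr_mem_Ext.2 (h (inr_mem_Ext.1 hV))

theorem Ext_injective : Function.Injective Γ.Ext := by
  intro U W h
  ext a
  rw [← inl_mem_Ext, h, inl_mem_Ext]

theorem defeats_inl {α : Γ.Att} {a : Γ.Arg} :
    Γ.Defeats α (Sum.inl a) ↔ Γ.trg α = Sum.inl a := by
  simp [Defeats, eq_comm]

/-- Since no attack targets an attack, only indirect defeat of attacks remains. -/
theorem IsAF.defeats_inr (hAF : Γ.IsAF) {α β : Γ.Att} :
    Γ.Defeats α (Sum.inr β) ↔ Γ.trg α = Sum.inl (Γ.src β) := by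
  obtain ⟨a, ha⟩ := hAF α
  simp [Defeats, ha]

theorem IsAF.acceptable_inr (hAF : Γ.IsAF) {S : Set Γ.El} {α : Γ.Att} :
    Γ.Acceptable S (Sum.inr α) ↔ Γ.Acceptable S (Sum.inl (Γ.src α)) := by
  simp only [Acceptable, hAF.defeats_inr, defeats_inl]

/-- Every value of the characteristic function of an AF is determined by its arguments. -/
theorem charFun_eq_Ext (hAF : Γ.IsAF) (S : Set Γ.El) :
    Γ.charFun S = Γ.Ext {a | Sum.inl a ∈ Γ.charFun S} := by
  ext (a | α)
  · simp
  · rw [inr_mem_Ext]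
    exact hAF.acceptable_inr

theorem IsAF.acceptable_Ext_inl (hAF : Γ.IsAF) {W : Set Γ.Arg} {a : Γ.Arg} :
    Γ.Acceptable (Γ.Ext W) (Sum.inl a) ↔ Γ.DAcceptable W a := by
  simp only [Acceptable, DAcceptable, AttacksAF, defeats_inl, hAF.defeats_inr, inr_mem_Ext]
  constructor
  · rintro h b ⟨α, rfl, hα⟩
    obtain ⟨β, hβ, hβα⟩ := h α hα
    exact ⟨Γ.src β, hβ, β, rfl, hβα⟩
  · intro h α hα
    obtain ⟨c, hc, β, rfl, hβ⟩ := h (Γ.src α) ⟨α, rfl, hα⟩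
    exact ⟨β, hc, hβ⟩

/-- `Ext` intertwines the two characteristic functions of an AF. -/
theorem charFun_Ext (hAF : Γ.IsAF) (W : Set Γ.Arg) :
    Γ.charFun (Γ.Ext W) = Γ.Ext (Γ.dCharFun W) := by
  rw [charFun_eq_Ext hAF]
  congr 1
  ext a
  exact hAF.acceptable_Ext_inl

end AFRA

/-- In an AF, the grounded extension (least fixed point of the AFRA
characteristic function) is the image under `Ext` of the D-grounded
extension (least fixed point of the D-characteristic function). -/
theorem stmt_19 (Γ : AFRA) (hAF : Γ.IsAF)
    (S : Set Γ.El)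
    (hSfix : Γ.charFun S = S)
    (hSleast : ∀ T : Set Γ.El, Γ.charFun T = T → S ⊆ T)
    (U : Set Γ.Arg)
    (hUfix : Γ.dCharFun U = U)
    (hUleast : ∀ W : Set Γ.Arg, Γ.dCharFun W = W → U ⊆ W) :
    S = Γ.Ext U := by
  apply Set.Subset.antisymm
  · apply hSleast
    rw [AFRA.charFun_Ext hAF, hUfix]
  · have hS : S = Γ.Ext {a | Sum.inl a ∈ S} := by
      simpa only [hSfix] using AFRA.charFun_eq_Ext hAF S
    have hW : Γ.dCharFun {a | Sum.inl a ∈ S} = {a | Sum.inl a ∈ S} := by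
      apply AFRA.Ext_injective
      rw [← AFRA.charFun_Ext hAF, ← hS, hSfix]
    rw [hS]
    exact AFRA.Ext_mono (hUleast _ hW)
end
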